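/- Let R be an algebraic curvature operator on ℝ⁴ with scal(R) ≥ 0 whose self-dual Weyl part W₊ has eigenvalues scal(R)/6, −scal(R)/12, −scal(R)/12 (counted with multiplicity, as a symmetric endomorphism of the 3-dimensional space Λ²₊). Then R is NNIC₊ but R is not PIC₊. -/

import Mathlib

noncomputable section

open scoped ComplexConjugate

/-- `ℝ⁴` with its standard basis. -/
abbrev V4 := Fin 4 → ℝ
/-- `Λ²ℝ⁴` in the coordinates given by the basis
`e₁∧e₂, e₁∧e₃, e₁∧e₄, e₂∧e₃, e₂∧e₄, e₃∧e₄` (0-indexed). -/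
abbrev L6 := Fin 6 → ℝ
/-- Endomorphisms of `Λ²ℝ⁴`, as `6×6` matrices. -/
abbrev M6 := Fin 6 → Fin 6 → ℝ

/-- standard basis of ℝ⁴ -/
def std4 (i : Fin 4) : V4 := fun j => if j = i then 1 else 0

/-- the standard inner product of ℝ⁴ -/
def ip4 (x y : V4) : ℝ := ∑ i, x i * y i

/-- the index pairs for the basis of Λ²ℝ⁴ -/
def pr : Fin 6 → Fin 4 × Fin 4 := ![(0,1),(0,2),(0,3),(1,2),(1,3),(2,3)]

/-- the wedge product `x ∧ y` of two vectors, in coordinates.  With this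
coordinate expression, the standard inner product `ip6` below satisfies
`⟨x∧y, z∧t⟩ = ⟨x,z⟩⟨y,t⟩ − ⟨x,t⟩⟨y,z⟩`. -/
def wedge (x y : V4) : L6 := fun k => x (pr k).1 * y (pr k).2 - x (pr k).2 * y (pr k).1

/-- the inner product of Λ²ℝ⁴ -/
def ip6 (a b : L6) : ℝ := ∑ k, a k * b k

/-- The Hodge star operator on Λ²ℝ⁴. -/
def hodge (w : L6) : L6 := ![w 5, -(w 4), w 3, w 2, -(w 1), w 0]

/-- self-dual 2-forms (the +1 eigenspace Λ²₊ of the Hodge star) -/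
def SelfDual (w : L6) : Prop := hodge w = w
/-- anti-self-dual 2-forms (the −1 eigenspace Λ²₋ of the Hodge star) -/
def AntiSelfDual (w : L6) : Prop := hodge w = -w

/-- application of an endomorphism (matrix) of Λ²ℝ⁴ to a 2-form -/
def appM (A : M6) (w : L6) : L6 := fun k => ∑ l, A k l * w l

/-- symmetry of an endomorphism of Λ²ℝ⁴ w.r.t. the inner product -/
def IsSymm6 (A : M6) : Prop := ∀ a b : L6, ip6 (appM A a) b = ip6 a (appM A b)

/-- the first Bianchi identity -/
def Bianchi (A : M6) : Prop := ∀ x y z t : V4,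
  ip6 (appM A (wedge x y)) (wedge z t) + ip6 (appM A (wedge z x)) (wedge y t)
    + ip6 (appM A (wedge y z)) (wedge x t) = 0

/-- algebraic curvature operators on ℝ⁴ : symmetric endomorphisms of Λ²ℝ⁴
satisfying the first Bianchi identity.  The set of these is `S²_BΛ²ℝ⁴`. -/
def IsCurvOp (A : M6) : Prop := IsSymm6 A ∧ Bianchi A

/-- the scalar curvature: twice the trace -/
def scal (A : M6) : ℝ := 2 * ∑ k, A k k

/-- orthogonal projection P₊ of Λ²ℝ⁴ onto Λ²₊ -/
def pplus (w : L6) : L6 := (1/2 : ℝ) • (w + hodge w)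

/-- the self-dual Weyl part W₊ of a curvature operator, as a map on Λ²₊:
`W₊η = P₊(Rη) − (scal(R)/12)·η`. -/
def Wplus (A : M6) (η : L6) : L6 := pplus (appM A η) - (scal A / 12) • η

/-- `R` is PIC₊ : the quadratic form `η ↦ ⟨Rη,η⟩` on Λ²₊ is 2-positive. -/
def PICp (A : M6) : Prop := ∀ η ζ : L6, SelfDual η → SelfDual ζ →
  ip6 η η = 1 → ip6 ζ ζ = 1 → ip6 η ζ = 0 →
  0 < ip6 (appM A η) η + ip6 (appM A ζ) ζ

/-- `R` is NNIC₊ : the quadratic form `η ↦ ⟨Rη,η⟩` on Λ²₊ is 2-nonnegative. -/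
def NNICp (A : M6) : Prop := ∀ η ζ : L6, SelfDual η → SelfDual ζ →
  ip6 η η = 1 → ip6 ζ ζ = 1 → ip6 η ζ = 0 →
  0 ≤ ip6 (appM A η) η + ip6 (appM A ζ) ζ

/-- `R` is PIC₋ : the quadratic form `η ↦ ⟨Rη,η⟩` on Λ²₋ is 2-positive. -/
def PICm (A : M6) : Prop := ∀ η ζ : L6, AntiSelfDual η → AntiSelfDual ζ →
  ip6 η η = 1 → ip6 ζ ζ = 1 → ip6 η ζ = 0 →
  0 < ip6 (appM A η) η + ip6 (appM A ζ) ζ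

/-- `R` is NNIC₋ : the quadratic form `η ↦ ⟨Rη,η⟩` on Λ²₋ is 2-nonnegative. -/
def NNICm (A : M6) : Prop := ∀ η ζ : L6, AntiSelfDual η → AntiSelfDual ζ →
  ip6 η η = 1 → ip6 ζ ζ = 1 → ip6 η ζ = 0 →
  0 ≤ ip6 (appM A η) η + ip6 (appM A ζ) ζ

/- ### complexifications -/

/-- `ℂ⁴` -/
abbrev VC4 := Fin 4 → ℂ
/-- `Λ²ℂ⁴` -/
abbrev LC6 := Fin 6 → ℂ

/-- the wedge product on ℂ⁴ -/
def wedgeC (x y : VC4) : LC6 := fun k => x (pr k).1 * y (pr k).2 - x (pr k).2 * y (pr k).1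

/-- the complex-bilinear extension of the inner product of ℝ⁴ -/
def bilC4 (x y : VC4) : ℂ := ∑ i, x i * y i

/-- the complex-bilinear extension of the inner product of Λ²ℝ⁴ -/
def bilC6 (a b : LC6) : ℂ := ∑ k, a k * b k

/-- the Hermitian inner product `⟨·,·⟩_h` on Λ²ℂ⁴ associated to the real inner
product on Λ²ℝ⁴ -/
def hermC6 (a b : LC6) : ℂ := ∑ k, a k * conj (b k)

/-- the complex-linear extension of an endomorphism of Λ²ℝ⁴ to Λ²ℂ⁴ -/
def appMC (A : M6) (w : LC6) : LC6 := fun k => ∑ l, (A k l : ℂ) * w l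

/-- the complex-linear extension of the Hodge star -/
def hodgeC (w : LC6) : LC6 := ![w 5, -(w 4), w 3, w 2, -(w 1), w 0]

/-- membership in `Λ²₊ ⊗ ℂ` -/
def SelfDualC (w : LC6) : Prop := hodgeC w = w

/-!
On `Λ²₊` the quadratic form `η ↦ ⟨Rη, η⟩` is that of `P₊R = W₊ + scal/12`, whose eigenvalues
`scal/4, 0, 0` are nonnegative. It is therefore nonnegative, and it vanishes on the plane spanned by
the last two eigenvectors, so the sum over an orthonormal basis of that plane is not positive.
-/

section OrthonormalFamily

variable {R V ι : Type*} [CommRing R] [AddCommGroup V] [Module R V] [DecidableEq ι]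
  {B : LinearMap.BilinForm R V} {v : ι → V}

theorem linearIndependent_of_bilin_eq_ite (hv : ∀ i j, B (v i) (v j) = if i = j then 1 else 0) :
    LinearIndependent R v :=
  linearIndependent_iff'.2 fun _ _ hsum i hi => by simpa [hv, hi] using congrArg (B (v i)) hsum

variable [Fintype ι]

theorem sum_bilin_smul_eq_of_mem_span (hv : ∀ i j, B (v i) (v j) = if i = j then 1 else 0)
    {w : V} (hw : w ∈ Submodule.span R (Set.range v)) : ∑ i, B (v i) w • v i = w := by
  obtain ⟨c, rfl⟩ := (Submodule.mem_span_range_iff_exists_fun R).1 hw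
  simp [hv]

theorem bilin_apply_self_eq_sum_of_eigenvectors
    (hv : ∀ i j, B (v i) (v j) = if i = j then 1 else 0) {f : V →ₗ[R] V} {μ : ι → R}
    (hf : ∀ i, f (v i) = μ i • v i) {w : V} (hw : w ∈ Submodule.span R (Set.range v)) :
    B (f w) w = ∑ i, μ i * B (v i) w ^ 2 := by
  have hfw : f w = ∑ i, (B (v i) w * μ i) • v i := by
    conv_lhs => rw [← sum_bilin_smul_eq_of_mem_span hv hw]
    simp only [map_sum, map_smul, hf, smul_smul]
  rw [hfw]
  simp only [map_sum, map_smul, LinearMap.sum_apply, LinearMap.smul_apply, smul_eq_mul]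
  exact Finset.sum_congr rfl fun i _ => by ring

theorem span_range_eq_of_bilin_eq_ite {K V : Type*} [Field K] [AddCommGroup V] [Module K V]
    {B : LinearMap.BilinForm K V} {v : ι → V} {S : Submodule K V} [FiniteDimensional K S]
    (hv : ∀ i j, B (v i) (v j) = if i = j then 1 else 0) (hvS : ∀ i, v i ∈ S)
    (hS : Module.finrank K S = Fintype.card ι) : Submodule.span K (Set.range v) = S :=
  Submodule.eq_of_le_of_finrank_eq (Submodule.span_le.2 (Set.range_subset_iff.2 hvS)) <| by
    rw [finrank_span_eq_card (linearIndependent_of_bilin_eq_ite hv), hS]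

end OrthonormalFamily

/-- `hodge` as a linear endomorphism of `Λ²ℝ⁴`. -/
def hodgeLin : L6 →ₗ[ℝ] L6 where
  toFun := hodge
  map_add' a b := by ext k; fin_cases k <;> simp [hodge, add_comm]
  map_smul' c a := by ext k; fin_cases k <;> simp [hodge]

/-- The projection `P₊R` of an endomorphism `R` to `Λ²₊`, kept as a linear endomorphism of
the whole of `Λ²ℝ⁴`. -/
def pplusComp (A : M6) : L6 →ₗ[ℝ] L6 :=
  ((1 / 2 : ℝ) • (LinearMap.id + hodgeLin)) ∘ₗ Matrix.mulVecLin A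

theorem pplusComp_apply (A : M6) (w : L6) : pplusComp A w = pplus (appM A w) := rfl

/-- The space `Λ²₊` of self-dual 2-forms. -/
def selfDualForms : Submodule ℝ L6 := LinearMap.eqLocus hodgeLin LinearMap.id

theorem mem_selfDualForms {w : L6} : w ∈ selfDualForms ↔ SelfDual w := Iff.rfl

theorem selfDual_iff {w : L6} : SelfDual w ↔ w 3 = w 2 ∧ w 4 = -w 1 ∧ w 5 = w 0 := by
  constructor
  · intro h
    exact ⟨(congrFun h 3).symm, (congrFun h 4).symm, (congrFun h 5).symm⟩
  · rintro ⟨h3, h4, h5⟩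
    ext k
    fin_cases k <;> simp [hodge, *]

/-- Coordinates on `Λ²₊`: a self-dual form is determined by its first three coordinates. -/
def selfDualFormsEquiv : selfDualForms ≃ₗ[ℝ] (Fin 3 → ℝ) where
  toFun w := ![w.1 0, w.1 1, w.1 2]
  map_add' a b := by ext k; fin_cases k <;> rfl
  map_smul' c a := by ext k; fin_cases k <;> rfl
  invFun c := ⟨![c 0, c 1, c 2, c 2, -c 1, c 0], selfDual_iff.2 ⟨rfl, rfl, rfl⟩⟩
  left_inv w := by
    obtain ⟨h3, h4, h5⟩ := selfDual_iff.1 w.2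
    ext k
    fin_cases k <;> simp [*]
  right_inv c := by ext k; fin_cases k <;> rfl

theorem finrank_selfDualForms : Module.finrank ℝ selfDualForms = 3 := by
  rw [selfDualFormsEquiv.finrank_eq, Module.finrank_fin_fun]

theorem ip6_hodge_comm (a b : L6) : ip6 (hodge a) b = ip6 a (hodge b) := by
  simp only [ip6, hodge, Fin.sum_univ_six, Matrix.cons_val]
  ring

theorem SelfDual.ip6_pplus {w : L6} (hw : SelfDual w) (a : L6) : ip6 (pplus a) w = ip6 a w := by
  have hhodge : ip6 (hodge a) w = ip6 a w := by rw [ip6_hodge_comm, hw]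
  calc ip6 (pplus a) w = 1 / 2 * (ip6 a w + ip6 (hodge a) w) :=
        (smul_dotProduct _ _ _).trans (congrArg _ (add_dotProduct _ _ _))
    _ = ip6 a w := by rw [hhodge]; ring

section Spectrum

variable {A : M6}

theorem pplus_appM_eq_smul_of_Wplus_eq_smul {η : L6} {μ : ℝ} (h : Wplus A η = μ • η) :
    pplus (appM A η) = (μ + scal A / 12) • η := by
  rw [add_smul, ← h, Wplus, sub_add_cancel]

theorem SelfDual.ip6_appM_self_eq_of_Wplus_eq_smul {η : L6} (hη : SelfDual η) {μ : ℝ}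
    (h : Wplus A η = μ • η) : ip6 (appM A η) η = (μ + scal A / 12) * ip6 η η := by
  rw [← hη.ip6_pplus, pplus_appM_eq_smul_of_Wplus_eq_smul h]
  exact smul_dotProduct _ η η

theorem ip6_appM_self_eq_sum_of_Wplus_eq_smul {η : Fin 3 → L6} (hsd : ∀ i, SelfDual (η i))
    (hon : ∀ i j, ip6 (η i) (η j) = if i = j then 1 else 0) {μ : Fin 3 → ℝ}
    (hμ : ∀ i, Wplus A (η i) = μ i • η i) {w : L6} (hw : SelfDual w) :
    ip6 (appM A w) w = ∑ i, (μ i + scal A / 12) * ip6 (η i) w ^ 2 := by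
  have hspan : Submodule.span ℝ (Set.range η) = selfDualForms :=
    span_range_eq_of_bilin_eq_ite (B := dotProductBilin ℝ ℝ) hon hsd finrank_selfDualForms
  have heigen : ∀ i, pplusComp A (η i) = (μ i + scal A / 12) • η i := fun i => by
    rw [pplusComp_apply, pplus_appM_eq_smul_of_Wplus_eq_smul (hμ i)]
  rw [← hw.ip6_pplus, ← pplusComp_apply]
  exact bilin_apply_self_eq_sum_of_eigenvectors (B := dotProductBilin ℝ ℝ) hon heigen
    (hspan ▸ mem_selfDualForms.2 hw)

theorem nnicp_of_Wplus_eigenvalues_ge {η : Fin 3 → L6} (hsd : ∀ i, SelfDual (η i))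
    (hon : ∀ i j, ip6 (η i) (η j) = if i = j then 1 else 0) {μ : Fin 3 → ℝ}
    (hμ : ∀ i, Wplus A (η i) = μ i • η i) (hge : ∀ i, -(scal A / 12) ≤ μ i) : NNICp A := by
  have hnonneg : ∀ w, SelfDual w → 0 ≤ ip6 (appM A w) w := fun w hw => by
    rw [ip6_appM_self_eq_sum_of_Wplus_eq_smul hsd hon hμ hw]
    exact Finset.sum_nonneg fun i _ => mul_nonneg (neg_le_iff_add_nonneg.1 (hge i)) (sq_nonneg _)
  exact fun a b ha hb _ _ _ => add_nonneg (hnonneg a ha) (hnonneg b hb)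

theorem PICp.neg_lt_add_of_Wplus_eq_smul (hA : PICp A) {η ζ : L6} (hη : SelfDual η)
    (hζ : SelfDual ζ) (hηη : ip6 η η = 1) (hζζ : ip6 ζ ζ = 1) (hηζ : ip6 η ζ = 0) {μ ν : ℝ}
    (hμ : Wplus A η = μ • η) (hν : Wplus A ζ = ν • ζ) : -(scal A / 6) < μ + ν := by
  have hpos := hA η ζ hη hζ hηη hζζ hηζ
  rw [hη.ip6_appM_self_eq_of_Wplus_eq_smul hμ, hζ.ip6_appM_self_eq_of_Wplus_eq_smul hν, hηη,
    hζζ] at hpos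
  linarith

end Spectrum

theorem nnicPlus_not_picPlus_of_kaehler_weyl_spectrum_general (A : M6)
    (hscal : 0 ≤ scal A) (η : Fin 3 → L6)
    (hsd : ∀ i, SelfDual (η i))
    (hon : ∀ i j, ip6 (η i) (η j) = if i = j then 1 else 0)
    (h0 : Wplus A (η 0) = (scal A / 6) • η 0)
    (h1 : Wplus A (η 1) = (-(scal A / 12)) • η 1)
    (h2 : Wplus A (η 2) = (-(scal A / 12)) • η 2) :
    NNICp A ∧ ¬ PICp A := by
  constructor
  · let μ : Fin 3 → ℝ := ![scal A / 6, -(scal A / 12), -(scal A / 12)]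
    have hμ : ∀ i, Wplus A (η i) = μ i • η i := Fin.forall_fin_succ.2
      ⟨h0, Fin.forall_fin_two.2 ⟨h1, h2⟩⟩
    have hge : ∀ i, -(scal A / 12) ≤ μ i := Fin.forall_fin_succ.2
      ⟨show -(scal A / 12) ≤ scal A / 6 by linarith, Fin.forall_fin_two.2 ⟨le_rfl, le_rfl⟩⟩
    exact nnicp_of_Wplus_eigenvalues_ge hsd hon hμ hge
  · intro hpic
    have hlt := hpic.neg_lt_add_of_Wplus_eq_smul (hsd 1) (hsd 2) (by simp [hon]) (by simp [hon])
      (by simp [hon]) h1 h2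
    linarith

/-- an algebraic curvature operator with nonnegative scalar
curvature whose self-dual Weyl part has eigenvalues
`scal/6, −scal/12, −scal/12` (on an orthonormal basis of `Λ²₊`) is NNIC₊ but
not PIC₊. -/
theorem nnicPlus_not_picPlus_of_kaehler_weyl_spectrum (A : M6) (hA : IsCurvOp A)
    (hscal : 0 ≤ scal A) (η : Fin 3 → L6)
    (hsd : ∀ i, SelfDual (η i))
    (hon : ∀ i j, ip6 (η i) (η j) = if i = j then 1 else 0)
    (h0 : Wplus A (η 0) = (scal A / 6) • η 0)
    (h1 : Wplus A (η 1) = (-(scal A / 12)) • η 1)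
    (h2 : Wplus A (η 2) = (-(scal A / 12)) • η 2) :
    NNICp A ∧ ¬ PICp A :=
  nnicPlus_not_picPlus_of_kaehler_weyl_spectrum_general A hscal η hsd hon h0 h1 h2
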